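/- Let α ∈ (0,2]∖{1} and δ ∈ ℝ with |δ| ≤ min(α, 2−α). Then there exists a constant c_α > 0 such that 0 ≤ G_{α,δ}(1, x) ≤ c_α/(1 + |x|^{1+α}) for all x ∈ ℝ. -/

import Mathlib

/-!
Write `G(1, x)` as the inverse Fourier transform of `φ(z) = exp(-|z|^α e^{-iδ(π/2) sgn z})`.

Decay: rotating the ray of integration `z > 0` to `e^{-iθ} z` for a small `θ > 0` makes `e^{-ixz}`
decay exponentially. The integral of `e^{-ixz}` alone is purely imaginary and drops out of the real
part, and what remains, with `φ - 1 = O(|z|^α)` in place of `φ`, is `O(x^{-(1+α)})`.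

Positivity: it suffices that the integrable function `φ` is the characteristic function of a
probability measure. For `α = 2` this is a Gaussian. For `α < 2` a trigonometric identity factors
`φ` into two extremal functions (`δ = ±α`) at different scales. By a second contour rotation, the
characteristic function of a centred Pareto variable of index `α` behaves near `0` like that of the
extremal stable law, which is therefore the limit of normalised sums of such variables.
-/

open MeasureTheory
open scoped ComplexOrder

/-- The one-dimensional Green function
`G_{α,δ}(t,x) = (1/2π) ∫ exp(−izx − t|z|^α exp(−iδ(π/2) sgn z)) dz`. -/
noncomputable def G1 (a δ : ℝ) (t x : ℝ) : ℂ :=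
  ((1 / (2 * Real.pi) : ℝ)) • ∫ z : ℝ,
    Complex.exp (-(Complex.I * (z : ℂ) * (x : ℂ)) -
      ((t * |z| ^ a : ℝ) : ℂ) *
        Complex.exp (-(Complex.I * (δ : ℂ) * ((Real.pi / 2 : ℝ) : ℂ) *
          ((Real.sign z : ℝ) : ℂ))))

open Filter ProbabilityTheory Set Topology

/-! ### Characteristic functions -/

/-- The functions that are the characteristic function of some Borel probability measure on the
real line. -/
def IsCharFun (φ : ℝ → ℂ) : Prop :=
  ∃ μ : ProbabilityMeasure ℝ, charFun (μ : Measure ℝ) = φ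

namespace IsCharFun

variable {φ ψ : ℝ → ℂ}

lemma charFun (μ : Measure ℝ) [IsProbabilityMeasure μ] : IsCharFun (MeasureTheory.charFun μ) :=
  ⟨⟨μ, inferInstance⟩, rfl⟩

lemma apply_zero (hφ : IsCharFun φ) : φ 0 = 1 := by
  obtain ⟨μ, rfl⟩ := hφ
  simp

lemma apply_neg (hφ : IsCharFun φ) (z : ℝ) : φ (-z) = (starRingEnd ℂ) (φ z) := by
  obtain ⟨μ, rfl⟩ := hφ
  exact charFun_neg z

lemma exp_neg_mul_mul_I (x : ℝ) : IsCharFun fun z : ℝ ↦ Complex.exp (-(z * x * Complex.I)) :=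
  ⟨⟨Measure.dirac (-x), inferInstance⟩, funext fun z ↦ by simp [charFun_dirac]⟩

lemma mul (hφ : IsCharFun φ) (hψ : IsCharFun ψ) : IsCharFun fun z ↦ φ z * ψ z := by
  obtain ⟨μ, rfl⟩ := hφ
  obtain ⟨ν, rfl⟩ := hψ
  exact ⟨⟨(μ : Measure ℝ) ∗ ν, inferInstance⟩, funext (charFun_conv ·)⟩

lemma pow (hφ : IsCharFun φ) (n : ℕ) : IsCharFun fun z ↦ φ z ^ n := by
  induction n with
  | zero => simpa using exp_neg_mul_mul_I 0
  | succ n ih => simpa only [pow_succ] using ih.mul hφ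

lemma comp_mul_left (hφ : IsCharFun φ) (r : ℝ) : IsCharFun fun z ↦ φ (r * z) := by
  obtain ⟨μ, rfl⟩ := hφ
  exact ⟨μ.map (f := (r * ·)) (by fun_prop), funext (charFun_map_mul r ·)⟩

lemma of_tendsto {φ : ℕ → ℝ → ℂ} (hφ : ∀ n, IsCharFun (φ n)) (hψ : ContinuousAt ψ 0)
    (h : ∀ z, Tendsto (φ · z) atTop (𝓝 (ψ z))) : IsCharFun ψ := by
  choose μ hμ using hφ
  have tight : IsTightMeasureSet (range fun n ↦ (μ n : Measure ℝ)) :=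
    isTightMeasureSet_of_tendsto_charFun hψ fun z ↦ by simpa only [hμ] using h z
  have compact : IsCompact (closure (range μ)) :=
    isCompact_closure_of_isTightMeasureSet (by simpa [range, Set.ext_iff] using tight)
  obtain ⟨ν, -, n, hn, hν⟩ := compact.tendsto_subseq fun k ↦ subset_closure (mem_range_self k)
  refine ⟨ν, funext fun z ↦ tendsto_nhds_unique
    (ProbabilityMeasure.tendsto_iff_tendsto_charFun.1 hν z) ?_⟩
  simpa only [Function.comp_def, hμ] using (h z).comp hn.tendsto_atTop

lemma exp_of_tendsto {φ : ℕ → ℝ → ℂ} (hφ : ∀ n, IsCharFun (φ n)) (hψ : Continuous ψ)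
    (h : ∀ z, Tendsto (fun n : ℕ ↦ n * (φ n z - 1)) atTop (𝓝 (ψ z))) :
    IsCharFun fun z ↦ Complex.exp (ψ z) := by
  refine of_tendsto (fun n ↦ (hφ n).pow n) (by fun_prop) fun z ↦ ?_
  simpa using Complex.tendsto_one_add_pow_exp_of_tendsto (h z)

lemma integral_mul_gaussian_nonneg (hφ : IsCharFun φ) {ε : ℝ} (hε : 0 < ε) :
    0 ≤ ∫ z : ℝ, φ z * Real.exp (-ε * z ^ 2) := by
  obtain ⟨μ, rfl⟩ := hφ
  have swap : ∫ z : ℝ, MeasureTheory.charFun (μ : Measure ℝ) z * Real.exp (-ε * z ^ 2) =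
      ∫ y : ℝ, (∫ z : ℝ, Complex.exp (z * y * Complex.I) * Real.exp (-ε * z ^ 2)) ∂μ := by
    simp_rw [charFun_apply_real, ← integral_mul_const]
    refine integral_integral_swap (((integrable_exp_neg_mul_sq hε).mul_prod
      (integrable_const (1 : ℝ))).mono' (Continuous.aestronglyMeasurable ?_)
      (.of_forall fun p ↦ ?_))
    · simp only [Function.uncurry_def]
      fun_prop
    · simp [Function.uncurry_def, Complex.norm_exp, -Complex.ofReal_pow]
  have gaussian (y : ℝ) : ∫ z : ℝ, Complex.exp (z * y * Complex.I) * Real.exp (-ε * z ^ 2) =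
      ((Real.pi / ε) ^ (1 / 2 : ℝ) * Real.exp (-y ^ 2 / (4 * ε)) : ℝ) := by
    convert fourierIntegral_gaussian (b := ε) (by simpa using hε) y using 1
    · congr! 4
      · ring
      · simp
    · simp [Complex.ofReal_cpow (by positivity : 0 ≤ Real.pi / ε)]
  simp_rw [swap, gaussian, integral_complex_ofReal, Complex.zero_le_real]
  exact MeasureTheory.integral_nonneg fun y ↦ by positivity

lemma integral_nonneg (hφ : IsCharFun φ) (hint : Integrable φ) : 0 ≤ ∫ z, φ z := by
  have lim : Tendsto (fun n : ℕ ↦ ∫ z : ℝ, φ z * Real.exp (-(1 / (n + 1)) * z ^ 2)) atTop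
      (𝓝 (∫ z, φ z)) := by
    refine tendsto_integral_of_dominated_convergence (‖φ ·‖) (fun n ↦ ?_) hint.norm
      (fun n ↦ .of_forall fun z ↦ ?_) (.of_forall fun z ↦ ?_)
    · exact hint.aestronglyMeasurable.mul (Continuous.aestronglyMeasurable (by fun_prop))
    · rw [norm_mul, Complex.norm_real, Real.norm_of_nonneg (Real.exp_nonneg _)]
      refine mul_le_of_le_one_right (norm_nonneg _) (Real.exp_le_one_iff.2 ?_)
      rw [neg_mul]
      exact neg_nonpos.2 (by positivity)
    · have := ((tendsto_one_div_add_atTop_nhds_zero_nat (𝕜 := ℝ)).neg.mul_const (z ^ 2)).rexp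
      simpa using this.ofReal.const_mul (φ z)
  exact ge_of_tendsto' lim fun n ↦ hφ.integral_mul_gaussian_nonneg (by positivity)

lemma integral_exp_mul_nonneg (hφ : IsCharFun φ) (hint : Integrable φ) (x : ℝ) :
    0 ≤ ∫ z : ℝ, Complex.exp (-(x * Complex.I * z)) * φ z := by
  have shift : IsCharFun fun z : ℝ ↦ Complex.exp (-(x * Complex.I * z)) := by
    simpa only [mul_comm, mul_left_comm] using exp_neg_mul_mul_I x
  refine (shift.mul hφ).integral_nonneg (hint.bdd_mul (c := 1)
    (Continuous.aestronglyMeasurable (by fun_prop)) (.of_forall fun z ↦ ?_))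
  simp [Complex.norm_exp]

end IsCharFun

/-! ### Rotation of contours -/

lemma integrable_comp_abs {E : Type*} [NormedAddCommGroup E] {f : ℝ → E}
    (hf : IntegrableOn f (Ioi 0)) : Integrable fun x ↦ f |x| := by
  have pos : IntegrableOn (fun x ↦ f |x|) (Ioi 0) :=
    hf.congr_fun (fun x hx ↦ by rw [abs_of_pos hx]) measurableSet_Ioi
  have neg : IntegrableOn (fun x ↦ f |x|) (Iic 0) := by
    rw [← integrableOn_Ici_iff_integrableOn_Ioi, ← neg_zero] at pos
    simpa only [abs_neg] using pos.comp_neg_Iic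
  simpa only [Iic_union_Ioi, integrableOn_univ] using neg.union pos

lemma integrable_exp_neg_mul_abs {η : ℝ} (hη : 0 < η) :
    Integrable fun v : ℝ ↦ Real.exp (-η * |v|) :=
  integrable_comp_abs (exp_neg_integrableOn_Ioi 0 hη)

lemma setIntegral_Ioi_eq_integral_comp_exp {E : Type*} [NormedAddCommGroup E] [NormedSpace ℝ E]
    (f : ℝ → E) : ∫ u in Ioi 0, f u = ∫ v, Real.exp v • f (Real.exp v) := by
  rw [← Real.range_exp, ← image_univ, integral_image_eq_integral_abs_deriv_smul .univ
    (fun v _ ↦ (Real.hasDerivAt_exp v).hasDerivWithinAt) Real.exp_injective.injOn]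
  simp only [Measure.restrict_univ, Real.abs_exp]

lemma integrableOn_Ioi_iff_integrable_comp_exp {E : Type*} [NormedAddCommGroup E]
    [NormedSpace ℝ E] {f : ℝ → E} :
    IntegrableOn f (Ioi 0) ↔ Integrable fun v ↦ Real.exp v • f (Real.exp v) := by
  rw [← Real.range_exp, ← image_univ, integrableOn_image_iff_integrableOn_abs_deriv_smul .univ
    (fun v _ ↦ (Real.hasDerivAt_exp v).hasDerivWithinAt) Real.exp_injective.injOn]
  simp only [integrableOn_univ, Real.abs_exp]

section HorizontalShift

variable {Φ : ℂ → ℂ} {θ C η : ℝ}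

lemma integrable_horizontal_line {y : ℝ} (hη : 0 < η)
    (hΦ : ∀ v : ℝ, DifferentiableAt ℂ Φ (v - y * Complex.I))
    (hb : ∀ v : ℝ, ‖Φ (v - y * Complex.I)‖ ≤ C * Real.exp (-η * |v|)) :
    Integrable fun v : ℝ ↦ Φ (v - y * Complex.I) := by
  refine ((integrable_exp_neg_mul_abs hη).const_mul C).mono'
    (Continuous.aestronglyMeasurable ?_) (.of_forall hb)
  exact continuous_iff_continuousAt.2 fun v ↦ (hΦ v).continuousAt.comp
    (f := fun v : ℝ ↦ (v : ℂ) - y * Complex.I) (by fun_prop)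

lemma integral_rectangle_eq (s : ℝ) (hθ : 0 ≤ θ)
    (hΦ : ∀ v : ℝ, ∀ y ∈ Icc 0 θ, DifferentiableAt ℂ Φ (v - y * Complex.I)) :
    ∫ v in -s..s, Φ v = (∫ v in -s..s, Φ (v - θ * Complex.I)) +
      Complex.I * (∫ y in -θ..0, Φ (s + y * Complex.I)) -
      Complex.I * ∫ y in -θ..0, Φ ((-s : ℝ) + y * Complex.I) := by
  have cauchy := Complex.integral_boundary_rect_eq_zero_of_differentiableOn Φ
    ⟨-s, -θ⟩ ⟨s, 0⟩ fun z hz ↦ by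
      obtain ⟨-, hz⟩ := hz
      rw [mem_preimage, uIcc_of_le (by simpa using hθ)] at hz
      simpa [Complex.re_add_im] using
        (hΦ z.re (-z.im) ⟨by linarith [hz.2], by linarith [hz.1]⟩).differentiableWithinAt
  simp only [Complex.ofReal_zero, zero_mul, add_zero, smul_eq_mul, Complex.ofReal_neg, neg_mul,
    ← sub_eq_add_neg] at cauchy ⊢
  linear_combination (-1 : ℂ) * cauchy

lemma tendsto_integral_vertical_segment {s : ℕ → ℝ} (hs : Tendsto (|s ·|) atTop atTop)
    (hθ : 0 ≤ θ) (hη : 0 < η)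
    (hb : ∀ v : ℝ, ∀ y ∈ Icc 0 θ, ‖Φ (v - y * Complex.I)‖ ≤ C * Real.exp (-η * |v|)) :
    Tendsto (fun n ↦ ∫ y in -θ..0, Φ (s n + y * Complex.I)) atTop (𝓝 0) := by
  have bound_tendsto : Tendsto (fun n ↦ C * Real.exp (-η * |s n|) * θ) atTop (𝓝 0) := by
    have := Real.tendsto_exp_atBot.comp (hs.const_mul_atTop_of_neg (neg_neg_iff_pos.2 hη))
    simpa using (this.const_mul C).mul_const θ
  refine squeeze_zero_norm (fun n ↦ ?_) bound_tendsto
  have := intervalIntegral.norm_integral_le_of_norm_le_const (a := -θ) (b := 0)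
    (f := fun y : ℝ ↦ Φ (s n + y * Complex.I)) (C := C * Real.exp (-η * |s n|)) fun y hy ↦ by
      rw [uIoc_of_le (by linarith)] at hy
      simpa using hb (s n) (-y) ⟨by linarith [hy.2], by linarith [hy.1]⟩
  simpa [abs_of_nonneg hθ] using this

lemma integral_horizontal_shift (hθ : 0 ≤ θ) (hη : 0 < η)
    (hΦ : ∀ v : ℝ, ∀ y ∈ Icc 0 θ, DifferentiableAt ℂ Φ (v - y * Complex.I))
    (hb : ∀ v : ℝ, ∀ y ∈ Icc 0 θ, ‖Φ (v - y * Complex.I)‖ ≤ C * Real.exp (-η * |v|)) :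
    ∫ v : ℝ, Φ v = ∫ v : ℝ, Φ (v - θ * Complex.I) := by
  have top : Tendsto (fun n : ℕ ↦ (n : ℝ)) atTop atTop := tendsto_natCast_atTop_atTop
  have bot : Tendsto (fun n : ℕ ↦ -(n : ℝ)) atTop atBot := tendsto_neg_atTop_atBot.comp top
  have line {y : ℝ} (hy : y ∈ Icc 0 θ) := intervalIntegral_tendsto_integral
    (integrable_horizontal_line hη (hΦ · y hy) (hb · y hy)) bot top
  have side {s : ℕ → ℝ} (hs : Tendsto (|s ·|) atTop atTop) :=
    (tendsto_integral_vertical_segment hs hθ hη hb).const_mul Complex.I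
  refine tendsto_nhds_unique (by simpa using line (left_mem_Icc.2 hθ)) ?_
  simp_rw [fun n : ℕ ↦ integral_rectangle_eq (n : ℝ) hθ hΦ]
  simpa using ((line (right_mem_Icc.2 hθ)).add (side (tendsto_abs_atTop_atTop.comp top))).sub
    (side (tendsto_abs_atBot_atTop.comp bot))

end HorizontalShift

/-- The point `u e^{-iy}`, at signed distance `u` from the origin on the ray of argument `-y`: the
rays onto which the half-line contours are rotated. -/
noncomputable def ray (y u : ℝ) : ℂ := u * Complex.exp (-(y * Complex.I))

lemma exp_sub_mul_I_eq_ray (v y : ℝ) : Complex.exp (v - y * Complex.I) = ray y (Real.exp v) := by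
  rw [ray, sub_eq_add_neg, Complex.exp_add, Complex.ofReal_exp]

lemma norm_ray {u : ℝ} (hu : 0 < u) (y : ℝ) : ‖ray y u‖ = u := by
  simp [ray, Complex.norm_exp, abs_of_pos hu]

lemma ray_zero_left (u : ℝ) : ray 0 u = u := by
  simp [ray]

section Rotation

variable {f : ℂ → ℂ} {θ C p q : ℝ}

lemma norm_exp_mul_comp_exp_le {y : ℝ}
    (hfp : ∀ u > 0, ‖f (ray y u)‖ ≤ C * u ^ p) (hfq : ∀ u > 0, ‖f (ray y u)‖ ≤ C * u ^ q)
    (v : ℝ) :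
    ‖Complex.exp (v - y * Complex.I) * f (Complex.exp (v - y * Complex.I))‖ ≤
      C * Real.exp (-min (p + 1) (-(q + 1)) * |v|) := by
  have hC : 0 ≤ C := (norm_nonneg _).trans (by simpa using hfp 1 one_pos)
  have power {r : ℝ} (hr : ∀ u > 0, ‖f (ray y u)‖ ≤ C * u ^ r) :
      ‖ray y (Real.exp v) * f (ray y (Real.exp v))‖ ≤ C * Real.exp ((r + 1) * v) := by
    rw [norm_mul, norm_ray (Real.exp_pos v), add_mul, one_mul, Real.exp_add, mul_comm r,
      Real.exp_mul, mul_comm, ← mul_assoc]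
    exact mul_le_mul_of_nonneg_right (hr _ (Real.exp_pos v)) (Real.exp_nonneg v)
  rw [exp_sub_mul_I_eq_ray]
  rcases le_total 0 v with hv | hv
  · rw [abs_of_nonneg hv]
    refine (power hfq).trans (mul_le_mul_of_nonneg_left (Real.exp_le_exp.2 ?_) hC)
    nlinarith [min_le_right (p + 1) (-(q + 1))]
  · rw [abs_of_nonpos hv]
    refine (power hfp).trans (mul_le_mul_of_nonneg_left (Real.exp_le_exp.2 ?_) hC)
    nlinarith [min_le_left (p + 1) (-(q + 1))]

lemma differentiableAt_mul_comp_exp {y : ℝ} (hf : ∀ u > 0, DifferentiableAt ℂ f (ray y u))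
    (v : ℝ) :
    DifferentiableAt ℂ (fun ζ ↦ Complex.exp ζ * f (Complex.exp ζ)) (v - y * Complex.I) := by
  refine Complex.differentiableAt_exp.mul (DifferentiableAt.comp _ ?_ Complex.differentiableAt_exp)
  exact exp_sub_mul_I_eq_ray v y ▸ hf _ (Real.exp_pos v)

lemma integrableOn_Ioi_ray {y : ℝ} (hp : -1 < p) (hq : q < -1)
    (hf : ∀ u > 0, DifferentiableAt ℂ f (ray y u))
    (hfp : ∀ u > 0, ‖f (ray y u)‖ ≤ C * u ^ p) (hfq : ∀ u > 0, ‖f (ray y u)‖ ≤ C * u ^ q) :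
    IntegrableOn (fun u ↦ f (ray y u)) (Ioi 0) := by
  have line := integrable_horizontal_line (Φ := fun ζ ↦ Complex.exp ζ * f (Complex.exp ζ))
    (lt_min (by linarith) (by linarith)) (differentiableAt_mul_comp_exp hf)
    (norm_exp_mul_comp_exp_le hfp hfq)
  rw [integrableOn_Ioi_iff_integrable_comp_exp]
  refine (line.const_mul (Complex.exp (y * Complex.I))).congr (.of_forall fun v ↦ ?_)
  simp only [exp_sub_mul_I_eq_ray, ← mul_assoc, Complex.real_smul]
  rw [ray, mul_left_comm, ← Complex.exp_add, add_neg_cancel, Complex.exp_zero, mul_one]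

lemma integral_Ioi_ray_eq_integral_comp_exp (f : ℂ → ℂ) (y : ℝ) :
    Complex.exp (-(y * Complex.I)) * ∫ u in Ioi 0, f (ray y u) =
      ∫ v : ℝ, Complex.exp (v - y * Complex.I) * f (Complex.exp (v - y * Complex.I)) := by
  rw [setIntegral_Ioi_eq_integral_comp_exp, ← integral_const_mul]
  refine congrArg _ (funext fun v ↦ ?_)
  rw [exp_sub_mul_I_eq_ray, Complex.real_smul, ray]
  ring

lemma integral_Ioi_rotate (hθ : 0 ≤ θ) (hp : -1 < p) (hq : q < -1)
    (hf : ∀ y ∈ Icc 0 θ, ∀ u > 0, DifferentiableAt ℂ f (ray y u))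
    (hfp : ∀ y ∈ Icc 0 θ, ∀ u > 0, ‖f (ray y u)‖ ≤ C * u ^ p)
    (hfq : ∀ y ∈ Icc 0 θ, ∀ u > 0, ‖f (ray y u)‖ ≤ C * u ^ q) :
    ∫ u : ℝ in Ioi 0, f u = Complex.exp (-(θ * Complex.I)) * ∫ u in Ioi 0, f (ray θ u) := by
  have shift := integral_horizontal_shift (Φ := fun ζ ↦ Complex.exp ζ * f (Complex.exp ζ)) hθ
    (lt_min (by linarith) (by linarith))
    (fun v y hy ↦ differentiableAt_mul_comp_exp (hf y hy) v)
    (fun v y hy ↦ norm_exp_mul_comp_exp_le (hfp y hy) (hfq y hy) v)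
  rw [integral_Ioi_ray_eq_integral_comp_exp f θ, ← shift]
  simpa [ray_zero_left] using integral_Ioi_ray_eq_integral_comp_exp f 0

end Rotation

section Ray

variable {y u : ℝ}

lemma ray_re (y u : ℝ) : (ray y u).re = u * Real.cos y := by
  rw [ray, ← neg_mul, ← Complex.ofReal_neg, Complex.re_ofReal_mul, Complex.exp_ofReal_mul_I_re,
    Real.cos_neg]

lemma conj_ray (y u : ℝ) : (starRingEnd ℂ) (ray y u) = ray (-y) u := by
  simp [ray, ← Complex.exp_conj]

lemma ray_mul_ray (y u y' u' : ℝ) : ray y u * ray y' u' = ray (y + y') (u * u') := by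
  simp only [ray, Complex.ofReal_add, Complex.ofReal_mul, add_mul, neg_add, Complex.exp_add]
  ring

lemma exp_mul_ray (y y' u : ℝ) : Complex.exp (-(y * Complex.I)) * ray y' u = ray (y + y') u := by
  simpa [ray] using ray_mul_ray y 1 y' u

lemma ofReal_mul_I_mul_ray (x y u : ℝ) :
    x * Complex.I * ray y u = ray (y - Real.pi / 2) (x * u) := by
  have : x * Complex.I = ray (-(Real.pi / 2)) x := by
    simp [ray, ← neg_mul, Complex.exp_pi_div_two_mul_I]
  rw [this, ray_mul_ray, neg_add_eq_sub]

lemma log_ray (hu : 0 < u) (hy : |y| < Real.pi) :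
    Complex.log (ray y u) = Real.log u - y * Complex.I := by
  obtain ⟨h₁, h₂⟩ := abs_lt.1 hy
  rw [ray, Complex.log_ofReal_mul hu (Complex.exp_ne_zero _),
    Complex.log_exp (by simpa using h₂) (by simpa using by linarith), sub_eq_add_neg]

lemma ray_mem_slitPlane (hu : 0 < u) (hy : |y| < Real.pi) : ray y u ∈ Complex.slitPlane := by
  have harg : (ray y u).arg = -y := by
    rw [← Complex.log_im, log_ray hu hy]
    simp
  refine Complex.mem_slitPlane_iff_arg.2 ⟨fun h ↦ ?_, ?_⟩
  · exact (neg_lt.1 (abs_lt.1 hy).1).ne (harg.symm.trans h)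
  · exact norm_pos_iff.1 ((norm_ray hu y).symm ▸ hu)

lemma ray_cpow (hu : 0 < u) (hy : |y| < Real.pi) (a : ℝ) :
    ray y u ^ (a : ℂ) = ray (a * y) (u ^ a) := by
  rw [Complex.cpow_def_of_ne_zero (Complex.slitPlane_ne_zero (ray_mem_slitPlane hu hy)),
    log_ray hu hy, ray, Real.rpow_def_of_pos hu, Complex.ofReal_exp, ← Complex.exp_add]
  congr 1
  push_cast
  ring

lemma sin_two_mul_mul_ray (x y u : ℝ) : Real.sin (2 * x) * ray y u =
    Real.sin (x + y) * ray x u + Real.sin (x - y) * ray (-x) u := by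
  have ray_eq (y : ℝ) : ray y u = u * (Real.cos y - Real.sin y * Complex.I) := by
    rw [ray, ← neg_mul, ← Complex.ofReal_neg, Complex.exp_mul_I, ← Complex.ofReal_cos,
      ← Complex.ofReal_sin, Real.cos_neg, Real.sin_neg, Complex.ofReal_neg, neg_mul, sub_eq_add_neg]
  simp only [ray_eq, Real.sin_two_mul, Real.sin_add, Real.sin_sub, Real.cos_neg, Real.sin_neg]
  push_cast
  ring

end Ray

section ExpBounds

variable {w : ℂ}

lemma norm_exp_neg_le_one (hw : 0 ≤ w.re) : ‖Complex.exp (-w)‖ ≤ 1 := by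
  simpa [Complex.norm_exp] using hw

lemma norm_one_sub_exp_neg_le_two (hw : 0 ≤ w.re) : ‖1 - Complex.exp (-w)‖ ≤ 2 := by
  refine (norm_sub_le _ _).trans ?_
  linarith [norm_exp_neg_le_one hw, norm_one (α := ℂ)]

lemma norm_one_sub_exp_neg_le (hw : 0 ≤ w.re) : ‖1 - Complex.exp (-w)‖ ≤ ‖w‖ := by
  have := (convex_halfSpace_re_ge 0).norm_image_sub_le_of_norm_hasDerivWithin_le (C := 1) (x := w)
    (y := 0) (fun z _ ↦ (hasDerivAt_neg z).cexp.hasDerivWithinAt)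
    (fun z hz ↦ by simpa using norm_exp_neg_le_one hz) hw (by simp)
  simpa using this

lemma norm_one_sub_exp_neg_sub_le (hw : 0 ≤ w.re) : ‖1 - Complex.exp (-w) - w‖ ≤ ‖w‖ ^ 2 := by
  have hd (z : ℂ) : HasDerivAt (fun z ↦ 1 - Complex.exp (-z) - z) (Complex.exp (-z) - 1) z := by
    simpa using ((hasDerivAt_neg z).cexp.const_sub 1).fun_sub (hasDerivAt_id' z)
  have := ((convex_halfSpace_re_ge 0).inter (convex_closedBall 0 ‖w‖)
    ).norm_image_sub_le_of_norm_hasDerivWithin_le (C := ‖w‖) (x := 0) (y := w)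
    (fun z _ ↦ (hd z).hasDerivWithinAt) (fun z hz ↦ ?_) (by simp) (by simpa using hw)
  · simpa [sq] using this
  · rw [norm_sub_rev]
    exact (norm_one_sub_exp_neg_le hz.1).trans (by simpa using hz.2)

lemma exists_exp_neg_mul_rpow_le {a c : ℝ} (ha : 0 < a) (hc : 0 < c) {s : ℝ} (hs : 0 ≤ s) :
    ∃ C, ∀ u > 0, Real.exp (-(c * u ^ a)) ≤ C * u ^ (-s) := by
  refine ⟨(s / a / c) ^ (s / a), fun u hu ↦ ?_⟩
  have key := rpow_abs_le_mul_exp_abs (u ^ a) (div_nonneg hs ha.le) hc.ne'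
  rw [abs_of_pos (Real.rpow_pos_of_pos hu a), ← Real.rpow_mul hu.le,
    mul_div_cancel₀ _ ha.ne', abs_of_pos hc] at key
  rwa [Real.rpow_neg hu.le, ← div_eq_mul_inv, le_div_iff₀ (by positivity), mul_comm, Real.exp_neg,
    ← div_eq_mul_inv, div_le_iff₀ (Real.exp_pos _)]

end ExpBounds

/-! ### The stable exponent and the decay of its Fourier integral -/

/-- The exponent `|z|^a e^{-iδ(π/2) sgn z}` of the strictly stable characteristic function of
index `a` and skewness `δ`. -/
noncomputable def stableExponent (a δ z : ℝ) : ℂ :=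
  ray (δ * (Real.pi / 2) * Real.sign z) (|z| ^ a)

section StableExponent

variable {a δ z : ℝ}

lemma stableExponent_of_pos (hz : 0 < z) :
    stableExponent a δ z = ray (δ * (Real.pi / 2)) (z ^ a) := by
  rw [stableExponent, Real.sign_of_pos hz, mul_one, abs_of_pos hz]

lemma stableExponent_neg (a δ z : ℝ) : stableExponent a δ (-z) = stableExponent a (-δ) z := by
  simp [stableExponent, Real.sign_neg]

lemma stableExponent_zero (ha : a ≠ 0) (δ : ℝ) : stableExponent a δ 0 = 0 := by
  simp [stableExponent, ray, Real.zero_rpow ha]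

lemma stableExponent_mul (ha : a ≠ 0) (δ : ℝ) {r : ℝ} (hr : 0 ≤ r) (z : ℝ) :
    stableExponent a δ (r * z) = (r ^ a : ℝ) * stableExponent a δ z := by
  rcases hr.eq_or_lt with rfl | hr
  · simp [stableExponent_zero ha, Real.zero_rpow ha]
  · have sign_eq : Real.sign (r * z) = Real.sign z := by
      rcases lt_trichotomy z 0 with hz | rfl | hz
      · rw [Real.sign_of_neg hz, Real.sign_of_neg (mul_neg_of_pos_of_neg hr hz)]
      · rw [mul_zero]
      · rw [Real.sign_of_pos hz, Real.sign_of_pos (mul_pos hr hz)]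
    rw [stableExponent, stableExponent, sign_eq, abs_mul, abs_of_pos hr,
      Real.mul_rpow hr.le (abs_nonneg z), ray, ray, Complex.ofReal_mul, mul_assoc]

lemma sin_mul_stableExponent (ha : a ≠ 0) (δ z : ℝ) :
    Real.sin (a * Real.pi) * stableExponent a δ z =
      Real.sin ((a + δ) * (Real.pi / 2)) * stableExponent a a z +
        Real.sin ((a - δ) * (Real.pi / 2)) * stableExponent a a (-z) := by
  have of_pos (δ : ℝ) {z : ℝ} (hz : 0 < z) : Real.sin (a * Real.pi) * stableExponent a δ z =
      Real.sin ((a + δ) * (Real.pi / 2)) * stableExponent a a z +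
        Real.sin ((a - δ) * (Real.pi / 2)) * stableExponent a (-a) z := by
    simp only [stableExponent_of_pos hz]
    convert sin_two_mul_mul_ray (a * (Real.pi / 2)) (δ * (Real.pi / 2)) (z ^ a) using 4 <;> ring_nf
  rcases lt_trichotomy z 0 with hz | rfl | hz
  · have := of_pos (-δ) (neg_pos.2 hz)
    rw [← stableExponent_neg, ← stableExponent_neg, neg_neg] at this
    rw [this, ← sub_eq_add_neg, sub_neg_eq_add, add_comm]
  · simp [stableExponent_zero ha]
  · rw [stableExponent_neg, of_pos δ hz]

lemma conj_stableExponent (a δ z : ℝ) :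
    (starRingEnd ℂ) (stableExponent a δ z) = stableExponent a δ (-z) := by
  simp [stableExponent, conj_ray, Real.sign_neg]

lemma stableExponent_re (ha : a ≠ 0) (δ z : ℝ) :
    (stableExponent a δ z).re = Real.cos (δ * (Real.pi / 2)) * |z| ^ a := by
  rw [stableExponent, ray_re, mul_comm]
  rcases lt_trichotomy z 0 with hz | rfl | hz
  · rw [Real.sign_of_neg hz, mul_neg_one, Real.cos_neg]
  · simp [Real.zero_rpow ha]
  · rw [Real.sign_of_pos hz, mul_one]

lemma continuous_stableExponent (ha : 0 < a) (δ : ℝ) : Continuous (stableExponent a δ) := by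
  have split : stableExponent a δ = fun z ↦
      ray (δ * (Real.pi / 2)) (max z 0 ^ a) + ray (-(δ * (Real.pi / 2))) (max (-z) 0 ^ a) := by
    funext z
    rcases lt_trichotomy z 0 with hz | rfl | hz
    · simp [stableExponent, ray, Real.sign_of_neg hz, abs_of_neg hz, max_eq_right hz.le,
        max_eq_left (neg_nonneg.2 hz.le), Real.zero_rpow ha.ne']
    · simp [stableExponent, ray, Real.zero_rpow ha.ne']
    · simp [stableExponent, ray, Real.sign_of_pos hz, abs_of_pos hz, max_eq_left hz.le,
        max_eq_right (neg_nonpos.2 hz.le), Real.zero_rpow ha.ne']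
  have rpow_continuous {g : ℝ → ℝ} (hg : Continuous g) : Continuous fun z ↦ g z ^ a :=
    hg.rpow_const fun _ ↦ .inr ha.le
  rw [split]
  unfold ray
  have := rpow_continuous (g := (max · 0)) (by fun_prop)
  have := rpow_continuous (g := fun z ↦ max (-z) 0) (by fun_prop)
  fun_prop

lemma cos_mul_pi_div_two_pos (hδ : |δ| < 1) : 0 < Real.cos (δ * (Real.pi / 2)) := by
  obtain ⟨h₁, h₂⟩ := abs_lt.1 hδ
  exact Real.cos_pos_of_mem_Ioo ⟨by nlinarith [Real.pi_pos], by nlinarith [Real.pi_pos]⟩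

lemma integrable_exp_neg_stableExponent (ha : 0 < a) (hδ : |δ| < 1) :
    Integrable fun z ↦ Complex.exp (-stableExponent a δ z) := by
  have dominating : IntegrableOn (fun u ↦ Real.exp (-Real.cos (δ * (Real.pi / 2)) * u ^ a))
      (Ioi 0) := by
    simpa using integrableOn_rpow_mul_exp_neg_mul_rpow (s := 0) (by norm_num) ha
      (cos_mul_pi_div_two_pos hδ)
  refine (integrable_comp_abs dominating).mono'
    (continuous_stableExponent ha δ).neg.cexp.aestronglyMeasurable (.of_forall fun z ↦ ?_)
  rw [Complex.norm_exp, Complex.neg_re, stableExponent_re ha.ne', neg_mul]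

end StableExponent

section Decay

lemma integral_eq_two_mul_re_of_conj {h : ℝ → ℂ} (hint : Integrable h)
    (hconj : ∀ z, h (-z) = (starRingEnd ℂ) (h z)) :
    ∫ z, h z = (2 * (∫ z in Ioi 0, h z).re : ℝ) := by
  have left : ∫ z in Iic 0, h z = (starRingEnd ℂ) (∫ z in Ioi 0, h z) := by
    rw [← integral_conj, ← neg_zero, ← integral_comp_neg_Ioi]
    simp_rw [hconj, neg_zero]
  rw [← intervalIntegral.integral_Iic_add_Ioi hint.integrableOn hint.integrableOn (b := 0), left,
    add_comm, Complex.add_conj]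

lemma norm_exp_neg_mul_I_mul_ray (x y u : ℝ) :
    ‖Complex.exp (-(x * Complex.I * ray y u))‖ = Real.exp (-(x * Real.sin y) * u) := by
  rw [Complex.norm_exp, Complex.neg_re, ofReal_mul_I_mul_ray, ray_re, Real.cos_sub_pi_div_two]
  ring_nf

lemma integral_Ioi_exp_neg_mul_I_mul_ray {x θ : ℝ} (hx : 0 < x) (hθ : 0 < Real.sin θ) :
    Complex.exp (-(θ * Complex.I)) * ∫ u in Ioi 0, Complex.exp (-(x * Complex.I * ray θ u)) =
      1 / (x * Complex.I) := by
  have hre : (-(x * Complex.I * ray θ 1)).re < 0 := by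
    rw [Complex.neg_re, ofReal_mul_I_mul_ray, ray_re, Real.cos_sub_pi_div_two, mul_one]
    exact neg_neg_of_pos (mul_pos hx hθ)
  have linear (u : ℝ) : -(x * Complex.I * ray θ u) = -(x * Complex.I * ray θ 1) * u := by
    simp only [ray, Complex.ofReal_one, one_mul]
    ring
  rw [setIntegral_congr_fun measurableSet_Ioi fun u _ ↦ congrArg Complex.exp (linear u),
    integral_exp_mul_complex_Ioi hre]
  have hexp := Complex.exp_ne_zero (-(θ * Complex.I))
  have hx' : (x : ℂ) ≠ 0 := Complex.ofReal_ne_zero.2 hx.ne'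
  simp only [ray, Complex.ofReal_zero, Complex.ofReal_one, mul_zero, Complex.exp_zero, one_mul]
  field_simp

lemma exists_rotation_angle (a : ℝ) {δ : ℝ} (hδ : |δ| < 1) :
    ∃ θ ∈ Ioo 0 Real.pi, ∃ c > 0, ∀ y ∈ Icc 0 θ, c ≤ Real.cos (a * y + δ * (Real.pi / 2)) := by
  set c := Real.cos (δ * (Real.pi / 2))
  have hc : 0 < c := cos_mul_pi_div_two_pos hδ
  have hlim : Tendsto (fun y ↦ Real.cos (a * y + δ * (Real.pi / 2))) (𝓝[≥] 0) (𝓝 c) := by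
    refine (Continuous.tendsto' (by fun_prop) _ _ ?_).mono_left nhdsWithin_le_nhds
    simp [c]
  obtain ⟨θ, hθ, hsub⟩ := mem_nhdsGE_iff_exists_Icc_subset.1
    (inter_mem (hlim (le_mem_nhds (half_lt_self hc))) (Ico_mem_nhdsGE Real.pi_pos))
  exact ⟨θ, ⟨hθ, (hsub (right_mem_Icc.2 hθ.le)).2.2⟩, c / 2, half_pos hc, fun y hy ↦ (hsub hy).1⟩

variable {a δ x θ c : ℝ}

lemma norm_exp_mul_exp_neg_ray_le {u y : ℝ} (hx : 0 ≤ x) (hu : 0 ≤ u) (hy : 0 ≤ Real.sin y)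
    {y' : ℝ} (hc : c ≤ Real.cos y') :
    ‖Complex.exp (-(x * Complex.I * ray y u)) * Complex.exp (-ray y' (u ^ a))‖ ≤
      Real.exp (-(c * u ^ a)) := by
  rw [norm_mul, norm_exp_neg_mul_I_mul_ray, Complex.norm_exp, Complex.neg_re, ray_re,
    ← Real.exp_add, Real.exp_le_exp]
  nlinarith [mul_nonneg (mul_nonneg hx hy) hu, mul_le_mul_of_nonneg_left hc (Real.rpow_nonneg hu a)]

lemma integral_Ioi_stable_rotate (ha : 0 < a) (hx : 0 ≤ x) (hθ : θ ∈ Ioo 0 Real.pi) (hc : 0 < c)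
    (hcos : ∀ y ∈ Icc 0 θ, c ≤ Real.cos (a * y + δ * (Real.pi / 2))) :
    ∫ z : ℝ in Ioi 0, Complex.exp (-(x * Complex.I * z)) * Complex.exp (-stableExponent a δ z) =
      Complex.exp (-(θ * Complex.I)) * ∫ u in Ioi 0, Complex.exp (-(x * Complex.I * ray θ u)) *
        Complex.exp (-ray (a * θ + δ * (Real.pi / 2)) (u ^ a)) := by
  have abs_lt_pi {y : ℝ} (hy : y ∈ Icc 0 θ) : |y| < Real.pi :=
    (abs_of_nonneg hy.1).trans_lt (hy.2.trans_lt hθ.2)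
  set f : ℂ → ℂ := fun ζ ↦ Complex.exp (-(x * Complex.I * ζ)) *
    Complex.exp (-(ζ ^ (a : ℂ) * ray (δ * (Real.pi / 2)) 1)) with hf
  have f_ray {y u : ℝ} (hy : y ∈ Icc 0 θ) (hu : 0 < u) : f (ray y u) =
      Complex.exp (-(x * Complex.I * ray y u)) *
        Complex.exp (-ray (a * y + δ * (Real.pi / 2)) (u ^ a)) := by
    simp only [hf, ray_cpow hu (abs_lt_pi hy), ray_mul_ray, mul_one]
  have norm_le {y u : ℝ} (hy : y ∈ Icc 0 θ) (hu : 0 < u) :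
      ‖f (ray y u)‖ ≤ Real.exp (-(c * u ^ a)) :=
    f_ray hy hu ▸ norm_exp_mul_exp_neg_ray_le hx hu.le
      (Real.sin_nonneg_of_nonneg_of_le_pi hy.1 (hy.2.trans hθ.2.le)) (hcos y hy)
  obtain ⟨C, hC⟩ := exists_exp_neg_mul_rpow_le ha hc zero_le_two
  have rotate := integral_Ioi_rotate (f := f) (C := max 1 C) (p := 0) (q := -2) hθ.1.le
    (by norm_num) (by norm_num) (fun y hy u hu ↦ ?_) (fun y hy u hu ↦ ?_) (fun y hy u hu ↦ ?_)
  · rw [← setIntegral_congr_fun measurableSet_Ioi fun u hu ↦ f_ray (right_mem_Icc.2 hθ.1.le) hu,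
      ← rotate]
    refine setIntegral_congr_fun measurableSet_Ioi fun z hz ↦ ?_
    simpa [ray_zero_left, stableExponent_of_pos (mem_Ioi.1 hz)] using
      (f_ray (left_mem_Icc.2 hθ.1.le) hz).symm
  · have := (differentiableAt_fun_id (x := ray y u)).cpow_const (c := (a : ℂ))
      (ray_mem_slitPlane hu (abs_lt_pi hy))
    fun_prop
  · rw [Real.rpow_zero, mul_one]
    refine (norm_le hy hu).trans (le_max_of_le_left (Real.exp_le_one_iff.2 ?_))
    exact neg_nonpos.2 (by positivity)
  · refine (norm_le hy hu).trans ((hC u hu).trans ?_)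
    gcongr
    exact le_max_right _ _

lemma integrableOn_exp_neg_mul_I_mul_ray (hx : 0 < x) (hθ : 0 < Real.sin θ) :
    IntegrableOn (fun u ↦ Complex.exp (-(x * Complex.I * ray θ u))) (Ioi 0) := by
  refine (exp_neg_integrableOn_Ioi 0 (mul_pos hx hθ)).mono'
    (Continuous.aestronglyMeasurable ?_)
    (.of_forall fun u ↦ (norm_exp_neg_mul_I_mul_ray x θ u).le)
  unfold ray
  fun_prop

lemma ray_rpow_re_nonneg {y u : ℝ} (hy : 0 ≤ Real.cos y) (hu : 0 ≤ u) (a : ℝ) :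
    0 ≤ (ray y (u ^ a)).re :=
  ray_re y _ ▸ mul_nonneg (Real.rpow_nonneg hu a) hy

lemma norm_integral_Ioi_exp_mul_exp_neg_ray_sub_one_le (ha : -1 < a) (hx : 0 < x)
    (hθ : 0 < Real.sin θ) {y : ℝ} (hy : 0 ≤ Real.cos y) :
    ‖∫ u in Ioi 0, Complex.exp (-(x * Complex.I * ray θ u)) *
      (Complex.exp (-ray y (u ^ a)) - 1)‖ ≤
      (1 / (x * Real.sin θ)) ^ (a + 1) * Real.Gamma (a + 1) := by
  rw [← Real.integral_rpow_mul_exp_neg_mul_Ioi (by linarith) (mul_pos hx hθ)]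
  refine norm_integral_le_of_norm_le ?_
    (ae_restrict_of_forall_mem measurableSet_Ioi fun u hu ↦ ?_)
  · simpa [IntegrableOn] using
      integrableOn_rpow_mul_exp_neg_mul_rpow ha one_pos (mul_pos hx hθ)
  · rw [norm_mul, norm_exp_neg_mul_I_mul_ray, norm_sub_rev, mul_comm, neg_mul,
      add_sub_cancel_right]
    gcongr
    exact (norm_one_sub_exp_neg_le (ray_rpow_re_nonneg hy (le_of_lt hu) a)).trans_eq
      (norm_ray (Real.rpow_pos_of_pos hu a) y)

-- The rotated integral of `e^{-ixz}` alone is the purely imaginary `1 / (ix)`, so subtracting it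
-- does not change real parts.
lemma re_integral_Ioi_stable_eq (ha : 0 < a) (hx : 0 < x) (hθ : θ ∈ Ioo 0 Real.pi) (hc : 0 < c)
    (hcos : ∀ y ∈ Icc 0 θ, c ≤ Real.cos (a * y + δ * (Real.pi / 2))) :
    (∫ z : ℝ in Ioi 0, Complex.exp (-(x * Complex.I * z)) *
      Complex.exp (-stableExponent a δ z)).re =
      (Complex.exp (-(θ * Complex.I)) * ∫ u in Ioi 0, Complex.exp (-(x * Complex.I * ray θ u)) *
        (Complex.exp (-ray (a * θ + δ * (Real.pi / 2)) (u ^ a)) - 1)).re := by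
  have hsin : 0 < Real.sin θ := Real.sin_pos_of_mem_Ioo hθ
  have integrable := integrableOn_exp_neg_mul_I_mul_ray hx hsin
  have integrable_mul := integrable.mul_bdd (c := 1)
    (g := fun u ↦ Complex.exp (-ray (a * θ + δ * (Real.pi / 2)) (u ^ a)))
    (Measurable.aestronglyMeasurable (by unfold ray; fun_prop))
    (ae_restrict_of_forall_mem measurableSet_Ioi fun u hu ↦ norm_exp_neg_le_one
      (ray_rpow_re_nonneg (hc.le.trans (hcos θ (right_mem_Icc.2 hθ.1.le))) (le_of_lt hu) a))
  have imaginary : (1 / (x * Complex.I)).re = 0 := by simp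
  simp_rw [integral_Ioi_stable_rotate ha hx.le hθ hc hcos, mul_sub, mul_one]
  rw [integral_sub integrable_mul integrable, mul_sub, Complex.sub_re,
    integral_Ioi_exp_neg_mul_I_mul_ray hx hsin, imaginary, sub_zero]

lemma exists_norm_integral_stable_le_of_pos (ha : 0 < a) (hδ : |δ| < 1) :
    ∃ M, ∀ x : ℝ, 0 < x → ‖∫ z : ℝ, Complex.exp (-(x * Complex.I * z)) *
      Complex.exp (-stableExponent a δ z)‖ ≤ M * x ^ (-(1 + a)) := by
  obtain ⟨θ, hθ, c, hc, hcos⟩ := exists_rotation_angle a hδ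
  have hsin : 0 < Real.sin θ := Real.sin_pos_of_mem_Ioo hθ
  refine ⟨2 * ((1 / Real.sin θ) ^ (a + 1) * Real.Gamma (a + 1)), fun x hx ↦ ?_⟩
  have integrable : Integrable fun z : ℝ ↦ Complex.exp (-(x * Complex.I * z)) *
      Complex.exp (-stableExponent a δ z) :=
    (integrable_exp_neg_stableExponent ha hδ).bdd_mul (c := 1)
      (Continuous.aestronglyMeasurable (by fun_prop))
      (.of_forall fun z ↦ by simp [Complex.norm_exp])
  have scaling : (1 / (x * Real.sin θ)) ^ (a + 1) =
      (1 / Real.sin θ) ^ (a + 1) * x ^ (-(1 + a)) := by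
    rw [← one_div_mul_one_div_rev, Real.mul_rpow (by positivity) (by positivity), one_div x,
      Real.inv_rpow hx.le, ← Real.rpow_neg hx.le, add_comm a]
  rw [integral_eq_two_mul_re_of_conj integrable fun z ↦ by
      simp [conj_stableExponent, ← Complex.exp_conj],
    re_integral_Ioi_stable_eq ha hx hθ hc hcos, Complex.norm_real, norm_mul, Real.norm_ofNat,
    mul_assoc, mul_right_comm, ← scaling]
  gcongr
  refine (Complex.abs_re_le_norm _).trans ?_
  rw [norm_mul, ← neg_mul, ← Complex.ofReal_neg, Complex.norm_exp_ofReal_mul_I, one_mul]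
  exact norm_integral_Ioi_exp_mul_exp_neg_ray_sub_one_le (by linarith) hx hsin
    (hc.le.trans (hcos θ (right_mem_Icc.2 hθ.1.le)))

lemma exists_norm_integral_stable_le (ha : 0 < a) (hδ : |δ| < 1) :
    ∃ M, ∀ x : ℝ, x ≠ 0 → ‖∫ z : ℝ, Complex.exp (-(x * Complex.I * z)) *
      Complex.exp (-stableExponent a δ z)‖ ≤ M * |x| ^ (-(1 + a)) := by
  obtain ⟨M, hM⟩ := exists_norm_integral_stable_le_of_pos ha hδ
  obtain ⟨N, hN⟩ := exists_norm_integral_stable_le_of_pos ha ((abs_neg δ).trans_lt hδ)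
  refine ⟨max M N, fun x hx ↦ ?_⟩
  rcases hx.lt_or_gt with hx | hx
  · rw [← integral_neg_eq_self, abs_of_neg hx]
    simp only [stableExponent_neg, Complex.ofReal_neg, mul_neg, ← neg_mul]
    refine le_trans ?_ (mul_le_mul_of_nonneg_right (le_max_right M N)
      (Real.rpow_nonneg (neg_nonneg.2 hx.le) _))
    simpa using hN (-x) (neg_pos.2 hx)
  · rw [abs_of_pos hx]
    exact (hM x hx).trans (mul_le_mul_of_nonneg_right (le_max_left M N) (by positivity))

end Decay

/-! ### Centred Pareto variables -/

/-- The integrand `1 - e^{-w}` of the Lévy–Khintchine formula, compensated by its linear part when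
`1 < a`, so that it is integrable against `u^{-(1+a)} du` for every `a ∈ (0, 2)`, `a ≠ 1`. -/
noncomputable def compensatedExp (a : ℝ) (w : ℂ) : ℂ :=
  1 - Complex.exp (-w) - if 1 < a then w else 0

section CompensatedExp

variable {a : ℝ}

lemma differentiable_compensatedExp (a : ℝ) : Differentiable ℂ (compensatedExp a) := by
  unfold compensatedExp
  split_ifs <;> fun_prop

lemma compensatedExp_ofReal (a u : ℝ) :
    compensatedExp a u = (1 - Real.exp (-u) - if 1 < a then u else 0 : ℝ) := by
  unfold compensatedExp
  split_ifs <;> simp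

lemma norm_compensatedExp_le {w : ℂ} (hw : 0 ≤ w.re) (a : ℝ) :
    ‖compensatedExp a w‖ ≤ 2 * ‖w‖ ^ (if 1 < a then 1 else 0 : ℝ) ∧
      ‖compensatedExp a w‖ ≤ 2 * ‖w‖ ^ ((if 1 < a then 1 else 0) + 1 : ℝ) := by
  unfold compensatedExp
  have linear := norm_one_sub_exp_neg_le hw
  split_ifs
  · have quadratic := norm_one_sub_exp_neg_sub_le hw
    rw [Real.rpow_one, one_add_one_eq_two, Real.rpow_two]
    exact ⟨(norm_sub_le _ _).trans (by linarith), by linarith [sq_nonneg ‖w‖]⟩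
  · simpa using ⟨norm_one_sub_exp_neg_le_two hw, by linarith [norm_nonneg w]⟩

lemma exists_norm_compensatedExp_mul_cpow_le (ha₀ : 0 < a) (ha₂ : a < 2) (ha₁ : a ≠ 1) :
    ∃ p q : ℝ, -1 < p ∧ q < -1 ∧ ∀ y : ℝ, |y| ≤ Real.pi / 2 → ∀ u > 0,
      ‖compensatedExp a (ray y u) * ray y u ^ ((-(1 + a) : ℝ) : ℂ)‖ ≤ 2 * u ^ p ∧
      ‖compensatedExp a (ray y u) * ray y u ^ ((-(1 + a) : ℝ) : ℂ)‖ ≤ 2 * u ^ q := by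
  set k : ℝ := if 1 < a then 1 else 0 with hk
  have hka : k < a ∧ a < k + 1 := by
    rcases ha₁.lt_or_gt with h | h
    · simp [hk, h.not_gt, ha₀, h]
    · rw [hk, if_pos h]
      exact ⟨h, by linarith⟩
  refine ⟨k + 1 + -(1 + a), k + -(1 + a), by linarith, by linarith, fun y hy u hu ↦ ?_⟩
  have hre : 0 ≤ (ray y u).re :=
    (ray_re y u).symm ▸ mul_nonneg hu.le (Real.cos_nonneg_of_mem_Icc (abs_le.1 hy))
  have bounds := norm_compensatedExp_le hre a
  rw [norm_ray hu, ← hk] at bounds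
  rw [norm_mul, ray_cpow hu (hy.trans_lt (half_lt_self Real.pi_pos)),
    norm_ray (Real.rpow_pos_of_pos hu _), Real.rpow_add hu (k + 1),
    Real.rpow_add hu k (-(1 + a)), ← mul_assoc, ← mul_assoc]
  exact ⟨by gcongr; exact bounds.2, by gcongr; exact bounds.1⟩

lemma differentiableAt_compensatedExp_mul_cpow {y u : ℝ} (hu : 0 < u) (hy : |y| < Real.pi)
    (a : ℝ) (c : ℂ) :
    DifferentiableAt ℂ (fun w ↦ compensatedExp a w * w ^ c) (ray y u) :=
  (differentiable_compensatedExp a _).mul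
    (differentiableAt_id.cpow_const (ray_mem_slitPlane hu hy))

lemma integrableOn_compensatedExp_ray {y : ℝ} (hy : |y| ≤ Real.pi / 2) (ha₀ : 0 < a) (ha₂ : a < 2)
    (ha₁ : a ≠ 1) :
    IntegrableOn (fun u : ℝ ↦ compensatedExp a (ray y u) * (u ^ (-(1 + a)) : ℝ)) (Ioi 0) := by
  have hπ : |y| < Real.pi := hy.trans_lt (half_lt_self Real.pi_pos)
  obtain ⟨p, q, hp, hq, bound⟩ := exists_norm_compensatedExp_mul_cpow_le ha₀ ha₂ ha₁
  have integrable := integrableOn_Ioi_ray hp hq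
    (fun u hu ↦ differentiableAt_compensatedExp_mul_cpow hu hπ a _)
    (fun u hu ↦ (bound y hy u hu).1) (fun u hu ↦ (bound y hy u hu).2)
  refine IntegrableOn.congr_fun
    (integrable.const_mul (Complex.exp (-(((1 + a) * y : ℝ) * Complex.I))))
    (fun u hu ↦ ?_) measurableSet_Ioi
  simp only [ray_cpow hu hπ]
  rw [mul_left_comm, exp_mul_ray, ← add_mul, add_neg_cancel, zero_mul, ray_zero_left]

lemma integral_compensatedExp_rotate (ha₀ : 0 < a) (ha₂ : a < 2) (ha₁ : a ≠ 1) {θ : ℝ}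
    (hθ : θ ∈ Icc 0 (Real.pi / 2)) :
    ∫ u : ℝ in Ioi 0, compensatedExp a (ray θ u) * (u ^ (-(1 + a)) : ℝ) =
      Complex.exp (-((a * θ : ℝ) * Complex.I)) *
        ∫ u : ℝ in Ioi 0, compensatedExp a u * (u ^ (-(1 + a)) : ℝ) := by
  have sector {y : ℝ} (hy : y ∈ Icc 0 θ) : |y| ≤ Real.pi / 2 :=
    abs_le.2 ⟨by linarith [hy.1, Real.pi_pos], hy.2.trans hθ.2⟩
  have hπ {y : ℝ} (hy : y ∈ Icc 0 θ) : |y| < Real.pi :=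
    (sector hy).trans_lt (half_lt_self Real.pi_pos)
  obtain ⟨p, q, hp, hq, bound⟩ := exists_norm_compensatedExp_mul_cpow_le ha₀ ha₂ ha₁
  have rotate := integral_Ioi_rotate hθ.1 hp hq
    (fun y hy u hu ↦ differentiableAt_compensatedExp_mul_cpow hu (hπ hy) a _)
    (fun y hy u hu ↦ (bound y (sector hy) u hu).1) (fun y hy u hu ↦ (bound y (sector hy) u hu).2)
  have real_axis (u : ℝ) (hu : u ∈ Ioi 0) : compensatedExp a u * (u : ℂ) ^ ((-(1 + a) : ℝ) : ℂ) =
      compensatedExp a u * (u ^ (-(1 + a)) : ℝ) := by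
    rw [Complex.ofReal_cpow (le_of_lt hu)]
  rw [setIntegral_congr_fun measurableSet_Ioi real_axis] at rotate
  rw [rotate, ← integral_const_mul, ← integral_const_mul]
  refine setIntegral_congr_fun measurableSet_Ioi fun u hu ↦ ?_
  simp only [ray_cpow hu (hπ (right_mem_Icc.2 hθ.1))]
  rw [mul_left_comm _ (compensatedExp _ _), mul_left_comm _ (compensatedExp _ _), exp_mul_ray,
    exp_mul_ray, show a * θ + (θ + -(1 + a) * θ) = 0 by ring, ray_zero_left]

lemma sin_mul_compensatedExp_pos (ha₀ : 0 < a) (ha₂ : a < 2) (ha₁ : a ≠ 1) {u : ℝ} (hu : 0 < u) :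
    0 < Real.sin (a * Real.pi) * (1 - Real.exp (-u) - if 1 < a then u else 0) := by
  have hπ := Real.pi_pos
  rcases ha₁.lt_or_gt with h | h
  · have hexp : Real.exp (-u) < 1 := Real.exp_lt_one_iff.2 (neg_neg_of_pos hu)
    have hsin : 0 < Real.sin (a * Real.pi) :=
      Real.sin_pos_of_pos_of_lt_pi (by positivity) (by nlinarith)
    simpa [h.not_gt] using mul_pos hsin (sub_pos.2 hexp)
  · have hexp := Real.add_one_lt_exp (neg_ne_zero.2 hu.ne')
    have hsin : 0 < Real.sin ((a - 1) * Real.pi) :=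
      Real.sin_pos_of_pos_of_lt_pi (mul_pos (sub_pos.2 h) hπ) (by nlinarith)
    rw [sub_mul, one_mul, Real.sin_sub_pi] at hsin
    rw [if_pos h]
    nlinarith

lemma exists_integral_compensatedExp_eq (ha₀ : 0 < a) (ha₂ : a < 2) (ha₁ : a ≠ 1) :
    ∃ K : ℝ, 0 < Real.sin (a * Real.pi) * K ∧
      ∫ u : ℝ in Ioi 0, compensatedExp a (ray (Real.pi / 2) u) * (u ^ (-(1 + a)) : ℝ) =
        ray (a * (Real.pi / 2)) K := by
  let h (u : ℝ) : ℝ := (1 - Real.exp (-u) - if 1 < a then u else 0) * u ^ (-(1 + a))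
  have real (u : ℝ) : compensatedExp a u * (u ^ (-(1 + a)) : ℝ) = h u := by
    rw [compensatedExp_ofReal, ← Complex.ofReal_mul]
  have pos (u : ℝ) (hu : u ∈ Ioi 0) : 0 < Real.sin (a * Real.pi) * h u := by
    rw [← mul_assoc]
    exact mul_pos (sin_mul_compensatedExp_pos ha₀ ha₂ ha₁ hu) (Real.rpow_pos_of_pos hu _)
  have integrable : IntegrableOn h (Ioi 0) := by
    have := integrableOn_compensatedExp_ray (y := 0)
      (by simpa using Real.pi_div_two_pos.le) ha₀ ha₂ ha₁
    simp only [ray_zero_left, real] at this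
    simpa [IntegrableOn] using this.re
  refine ⟨∫ u in Ioi 0, h u, ?_, ?_⟩
  · have support : Ioi 0 ⊆ Function.support fun u ↦ Real.sin (a * Real.pi) * h u :=
      fun u hu ↦ (pos u hu).ne'
    rw [← integral_const_mul, setIntegral_pos_iff_support_of_nonneg_ae
      (ae_restrict_of_forall_mem measurableSet_Ioi fun u hu ↦ (pos u hu).le)
      (integrable.const_mul _), inter_eq_right.2 support]
    simp
  · rw [integral_compensatedExp_rotate ha₀ ha₂ ha₁ ⟨by positivity, le_rfl⟩]
    simp_rw [real, integral_complex_ofReal, ray]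
    rw [mul_comm]

end CompensatedExp

section Pareto

variable {t r : ℝ}

lemma paretoMeasure_eq_withDensity_restrict (t r : ℝ) : paretoMeasure t r =
    (volume.restrict (Ioi t)).withDensity fun x ↦ (r * t ^ r * x ^ (-(r + 1))).toNNReal := by
  rw [restrict_Ioi_eq_restrict_Ici, ← withDensity_indicator measurableSet_Ici, paretoMeasure]
  congr! 1
  funext x
  by_cases hx : t ≤ x
  · rw [paretoPDF_of_le hx, indicator_of_mem (mem_Ici.2 hx), ENNReal.ofReal]
  · rw [paretoPDF_of_lt (not_le.1 hx), indicator_of_notMem (notMem_Ici.2 (not_le.1 hx))]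

lemma pareto_density_nonneg (ht : 0 ≤ t) (hr : 0 ≤ r) {x : ℝ} (hx : x ∈ Ioi t) :
    0 ≤ r * t ^ r * x ^ (-(r + 1)) := by
  have := ht.trans (le_of_lt hx)
  positivity

lemma integral_paretoMeasure {E : Type*} [NormedAddCommGroup E] [NormedSpace ℝ E] (ht : 0 ≤ t)
    (hr : 0 ≤ r) (f : ℝ → E) :
    ∫ x, f x ∂paretoMeasure t r = ∫ x in Ioi t, (r * t ^ r * x ^ (-(r + 1))) • f x := by
  rw [paretoMeasure_eq_withDensity_restrict, integral_withDensity_eq_integral_smul (by fun_prop)]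
  refine setIntegral_congr_fun measurableSet_Ioi fun x hx ↦ ?_
  rw [NNReal.smul_def, Real.coe_toNNReal _ (pareto_density_nonneg ht hr hx)]

lemma integrable_id_paretoMeasure (ht : 0 < t) (hr : 1 < r) :
    Integrable (fun x ↦ x) (paretoMeasure t r) := by
  rw [paretoMeasure_eq_withDensity_restrict, integrable_withDensity_iff_integrable_smul
    (by fun_prop)]
  refine IntegrableOn.congr_fun
    ((integrableOn_Ioi_rpow_of_lt (neg_lt_neg hr) ht).const_mul (r * t ^ r))
    (fun x hx ↦ ?_) measurableSet_Ioi
  have hx₀ : 0 < x := ht.trans hx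
  rw [NNReal.smul_def, Real.coe_toNNReal _ (pareto_density_nonneg ht.le (by linarith) hx),
    smul_eq_mul, mul_assoc _ _ x, ← Real.rpow_add_one hx₀.ne', neg_add, neg_add_cancel_right]

end Pareto

section Centering

variable {a : ℝ}

lemma integral_compensatedExp_eq {μ : Measure ℝ} [IsProbabilityMeasure μ]
    (hμ : 1 < a → Integrable (fun x ↦ x) μ) (w : ℝ) :
    ∫ x, compensatedExp a (ray (Real.pi / 2) (w * x)) ∂μ =
      1 + w * (if 1 < a then ∫ x, x ∂μ else 0 : ℝ) * Complex.I - charFun μ w := by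
  have imaginary (x : ℝ) : ray (Real.pi / 2) (w * x) = -(w * x * Complex.I) := by
    simp [ray, Complex.exp_neg]
  have integrable : Integrable (fun x : ℝ ↦ Complex.exp (w * x * Complex.I)) μ :=
    .of_bound (Continuous.aestronglyMeasurable (by fun_prop)) 1
      (.of_forall fun x ↦ by simp [Complex.norm_exp])
  simp only [compensatedExp, imaginary, neg_neg]
  split_ifs with h
  · have linear : Integrable (fun x : ℝ ↦ -(w * x * Complex.I)) μ :=
      (((hμ h).ofReal.const_mul _).mul_const _).neg
    have integrable_sub : Integrable (fun x : ℝ ↦ 1 - Complex.exp (w * x * Complex.I)) μ :=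
      (integrable_const 1).sub integrable
    rw [integral_sub integrable_sub linear, integral_sub (integrable_const 1) integrable,
      integral_neg, integral_mul_const, integral_const_mul, integral_complex_ofReal,
      charFun_apply_real]
    simp only [integral_const, probReal_univ, one_smul, sub_neg_eq_add]
    ring
  · simp [integral_sub (integrable_const 1) integrable, charFun_apply_real]

lemma integral_compensatedExp_paretoMeasure (ha : 0 ≤ a) {w : ℝ} (hw : 0 < w) :
    ∫ x, compensatedExp a (ray (Real.pi / 2) (w * x)) ∂paretoMeasure 1 a = a * (w ^ a : ℝ) *
      ∫ u in Ioi w, compensatedExp a (ray (Real.pi / 2) u) * (u ^ (-(1 + a)) : ℝ) := by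
  have scale := integral_comp_mul_left_Ioi
    (fun u ↦ compensatedExp a (ray (Real.pi / 2) u) * (u ^ (-(1 + a)) : ℝ)) 1 hw
  rw [mul_one, eq_inv_smul_iff₀ hw.ne'] at scale
  rw [integral_paretoMeasure zero_le_one ha, ← scale, Complex.real_smul, ← integral_const_mul,
    ← integral_const_mul]
  refine setIntegral_congr_fun measurableSet_Ioi fun x hx ↦ ?_
  have hx : 0 < x := one_pos.trans hx
  have power : a * 1 ^ a * x ^ (-(a + 1)) = a * w ^ a * (w * (w * x) ^ (-(1 + a))) := by
    rw [Real.one_rpow, Real.mul_rpow hw.le hx.le, neg_add 1 a, Real.rpow_add hw,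
      Real.rpow_neg_one, Real.rpow_neg hw.le, neg_add_rev]
    have := (Real.rpow_pos_of_pos hw a).ne'
    field_simp
  rw [power, Complex.real_smul]
  push_cast
  ring

lemma tendsto_one_sub_exp_mul {φ : ℝ → ℂ} {L : ℂ} (ha : a < 2) (m : ℝ)
    (h : Tendsto (fun w : ℝ ↦ (w ^ (-a) : ℝ) * (1 + w * m * Complex.I - φ w)) (𝓝[>] 0) (𝓝 L)) :
    Tendsto (fun w : ℝ ↦ (w ^ (-a) : ℝ) * (1 - Complex.exp (-(w * m * Complex.I)) * φ w))
      (𝓝[>] 0) (𝓝 L) := by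
  have remainder : Tendsto (fun w : ℝ ↦
      (w ^ (-a) : ℝ) * (1 - Complex.exp (w * m * Complex.I) - -(w * m * Complex.I)))
      (𝓝[>] 0) (𝓝 0) := by
    have power : Tendsto (fun w : ℝ ↦ w ^ (2 - a) * m ^ 2) (𝓝[>] 0) (𝓝 0) := by
      have := (Real.continuousAt_rpow_const 0 (2 - a)
        (.inr (by linarith))).tendsto.mul_const (m ^ 2)
      rw [Real.zero_rpow (by linarith), zero_mul] at this
      exact this.mono_left nhdsWithin_le_nhds
    refine squeeze_zero_norm' ?_ power
    filter_upwards [self_mem_nhdsWithin] with w (hw : 0 < w)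
    have taylor := norm_one_sub_exp_neg_sub_le (w := -(w * m * Complex.I)) (by simp)
    rw [norm_mul, Complex.norm_real, Real.norm_of_nonneg (by positivity),
      sub_eq_neg_add 2 a, Real.rpow_add hw, Real.rpow_two, mul_assoc (w ^ (-a))]
    gcongr
    simpa [mul_pow] using taylor
  have phase : Tendsto (fun w : ℝ ↦ Complex.exp (-(w * m * Complex.I))) (𝓝[>] 0) (𝓝 1) := by
    have : Continuous fun w : ℝ ↦ Complex.exp (-(w * m * Complex.I)) := by fun_prop
    simpa using this.continuousWithinAt.tendsto (x := (0 : ℝ)) (s := Ioi 0)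
  have total := phase.mul (h.sub remainder)
  rw [sub_zero, one_mul] at total
  refine total.congr fun w ↦ ?_
  have cancel : Complex.exp (-(w * m * Complex.I)) * Complex.exp (w * m * Complex.I) = 1 := by
    rw [← Complex.exp_add, neg_add_cancel, Complex.exp_zero]
  linear_combination ((w ^ (-a) : ℝ) : ℂ) * cancel

lemma exists_isCharFun_tendsto (ha₀ : 0 < a) (ha₂ : a < 2) (ha₁ : a ≠ 1) :
    ∃ φ, IsCharFun φ ∧ ∃ L : ℝ, 0 < Real.sin (a * Real.pi) * L ∧
      Tendsto (fun w : ℝ ↦ (w ^ (-a) : ℝ) * (1 - φ w)) (𝓝[>] 0)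
        (𝓝 (ray (a * (Real.pi / 2)) L)) := by
  have := isProbabilityMeasure_paretoMeasure one_pos ha₀
  obtain ⟨K, hK, integral_eq⟩ := exists_integral_compensatedExp_eq ha₀ ha₂ ha₁
  set m : ℝ := if 1 < a then ∫ x, x ∂paretoMeasure 1 a else 0
  have tail : Tendsto (fun w ↦ a * ∫ u in Ioi w,
      compensatedExp a (ray (Real.pi / 2) u) * (u ^ (-(1 + a)) : ℝ)) (𝓝[>] 0)
      (𝓝 (ray (a * (Real.pi / 2)) (a * K))) := by
    have lim := ((integrableOn_compensatedExp_ray (abs_of_pos Real.pi_div_two_pos).le ha₀ ha₂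
      ha₁).continuousWithinAt_Ici_primitive_Ioi.mono Ioi_subset_Ici_self).tendsto.const_mul (a : ℂ)
    rw [integral_eq] at lim
    simpa only [ray, Complex.ofReal_mul, mul_assoc] using lim
  refine ⟨fun w ↦ Complex.exp (-(w * m * Complex.I)) * charFun (paretoMeasure 1 a) w,
    (IsCharFun.exp_neg_mul_mul_I m).mul (.charFun _), a * K, by nlinarith,
    tendsto_one_sub_exp_mul ha₂ m ?_⟩
  refine tail.congr' ?_
  filter_upwards [self_mem_nhdsWithin] with w (hw : 0 < w)
  rw [← integral_compensatedExp_eq (integrable_id_paretoMeasure one_pos) w,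
    integral_compensatedExp_paretoMeasure ha₀.le hw, ← mul_assoc, mul_left_comm,
    ← Complex.ofReal_mul, ← Real.rpow_add hw, neg_add_cancel, Real.rpow_zero,
    Complex.ofReal_one, mul_one]

end Centering

/-! ### Stable characteristic functions -/

section StableLaw

variable {a δ : ℝ}

lemma tendsto_mul_sub_one_of_pos {φ : ℝ → ℂ} {L z : ℝ} (ha : 0 < a) (hz : 0 < z)
    (h : Tendsto (fun w : ℝ ↦ (w ^ (-a) : ℝ) * (1 - φ w)) (𝓝[>] 0)
      (𝓝 (ray (δ * (Real.pi / 2)) L))) :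
    Tendsto (fun n : ℕ ↦ n * (φ ((n : ℝ) ^ (-a⁻¹) * z) - 1)) atTop
      (𝓝 (-(L * stableExponent a δ z))) := by
  have scale : Tendsto (fun n : ℕ ↦ (n : ℝ) ^ (-a⁻¹) * z) atTop (𝓝[>] 0) := by
    refine tendsto_nhdsWithin_iff.2 ⟨?_, ?_⟩
    · simpa using ((tendsto_rpow_neg_atTop (inv_pos.2 ha)).comp
        tendsto_natCast_atTop_atTop).mul_const z
    · filter_upwards [eventually_gt_atTop 0] with n hn
      exact mul_pos (Real.rpow_pos_of_pos (Nat.cast_pos.2 hn) _) hz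
  have lim := ((h.comp scale).const_mul ((z ^ a : ℝ) : ℂ)).neg
  have limit_eq : (z ^ a : ℝ) * ray (δ * (Real.pi / 2)) L = L * stableExponent a δ z := by
    rw [stableExponent_of_pos hz, ray, ray, mul_left_comm]
  rw [limit_eq] at lim
  refine lim.congr' ?_
  filter_upwards [eventually_gt_atTop 0] with n hn
  have hn : (0 : ℝ) < n := Nat.cast_pos.2 hn
  have power : z ^ a * ((n : ℝ) ^ (-a⁻¹) * z) ^ (-a) = n := by
    rw [Real.mul_rpow (by positivity) hz.le, ← Real.rpow_mul hn.le, neg_mul_neg,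
      inv_mul_cancel₀ ha.ne', Real.rpow_one, mul_left_comm, ← Real.rpow_add hz, add_neg_cancel,
      Real.rpow_zero, mul_one]
  rw [Function.comp_apply, ← mul_assoc, ← Complex.ofReal_mul, power, Complex.ofReal_natCast,
    ← mul_neg, neg_sub]

lemma IsCharFun.exp_neg_mul_stableExponent {φ : ℝ → ℂ} {L : ℝ} (hφ : IsCharFun φ) (ha : 0 < a)
    (h : Tendsto (fun w : ℝ ↦ (w ^ (-a) : ℝ) * (1 - φ w)) (𝓝[>] 0)
      (𝓝 (ray (δ * (Real.pi / 2)) L))) :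
    IsCharFun fun z ↦ Complex.exp (-(L * stableExponent a δ z)) := by
  refine IsCharFun.exp_of_tendsto (fun n : ℕ ↦ hφ.comp_mul_left ((n : ℝ) ^ (-a⁻¹)))
    ((continuous_stableExponent ha δ).const_mul _).neg fun z ↦ ?_
  rcases lt_trichotomy z 0 with hz | rfl | hz
  · have conj := (tendsto_mul_sub_one_of_pos ha (neg_pos.2 hz) h).star
    simpa [conj_stableExponent, hφ.apply_neg] using conj
  · simp [hφ.apply_zero, stableExponent_zero ha.ne']
  · exact tendsto_mul_sub_one_of_pos ha hz h

lemma isCharFun_exp_neg_mul_stableExponent_self (ha₀ : 0 < a) (ha₂ : a < 2) (ha₁ : a ≠ 1) {c : ℝ}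
    (hc : 0 ≤ c * Real.sin (a * Real.pi)) :
    IsCharFun fun z ↦ Complex.exp (-(c * stableExponent a a z)) := by
  obtain ⟨φ, hφ, L, hL, lim⟩ := exists_isCharFun_tendsto ha₀ ha₂ ha₁
  have ratio_nonneg : 0 ≤ c / L := by
    rw [← mul_div_mul_right c L (left_ne_zero_of_mul hL.ne'), mul_comm L]
    exact div_nonneg hc hL.le
  have power : L * ((c / L) ^ a⁻¹) ^ a = c := by
    rw [Real.rpow_inv_rpow ratio_nonneg ha₀.ne', mul_div_cancel₀ _ (right_ne_zero_of_mul hL.ne')]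
  have scaled := (hφ.exp_neg_mul_stableExponent ha₀ lim).comp_mul_left ((c / L) ^ a⁻¹)
  simpa only [stableExponent_mul ha₀.ne' a (Real.rpow_nonneg ratio_nonneg _), ← mul_assoc,
    ← Complex.ofReal_mul, power] using scaled

lemma isCharFun_exp_neg_sq : IsCharFun fun z : ℝ ↦ Complex.exp (-(z ^ 2 : ℝ)) := by
  convert IsCharFun.charFun (gaussianReal 0 2) using 2 with z
  simp [charFun_gaussianReal]

lemma isCharFun_exp_neg_stableExponent (ha₀ : 0 < a) (ha₂ : a ≤ 2) (ha₁ : a ≠ 1)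
    (hδ : |δ| ≤ min a (2 - a)) : IsCharFun fun z ↦ Complex.exp (-stableExponent a δ z) := by
  obtain ⟨hδa, hδ₂⟩ := le_min_iff.1 hδ
  rcases ha₂.eq_or_lt with rfl | ha₂
  · have hδ₀ : δ = 0 := by simpa using hδ₂
    simpa [stableExponent, hδ₀, ray_zero_left] using isCharFun_exp_neg_sq
  have sin_nonneg {ε : ℝ} (h : |ε| ≤ |δ|) : 0 ≤ Real.sin ((a + ε) * (Real.pi / 2)) := by
    obtain ⟨h₁, h₂⟩ := abs_le.1 h
    exact Real.sin_nonneg_of_nonneg_of_le_pi (mul_nonneg (by linarith) (by positivity))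
      (by nlinarith [Real.pi_pos])
  have hsin : Real.sin (a * Real.pi) ≠ 0 := fun h ↦ by
    simpa [h] using sin_mul_compensatedExp_pos ha₀ ha₂ ha₁ one_pos
  have extremal {ε : ℝ} (h : |ε| ≤ |δ|) := isCharFun_exp_neg_mul_stableExponent_self ha₀ ha₂ ha₁
    (c := Real.sin ((a + ε) * (Real.pi / 2)) / Real.sin (a * Real.pi))
    ((div_mul_cancel₀ _ hsin).symm ▸ sin_nonneg h)
  convert (extremal le_rfl).mul ((extremal (abs_neg δ).le).comp_mul_left (-1)) using 2 with z
  rw [← Complex.exp_add, ← neg_add, neg_one_mul, ← sub_eq_add_neg]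
  congr 2
  have hsin' : (Real.sin (a * Real.pi) : ℂ) ≠ 0 := Complex.ofReal_ne_zero.2 hsin
  rw [Complex.ofReal_div, Complex.ofReal_div, div_mul_eq_mul_div, div_mul_eq_mul_div, ← add_div,
    ← sin_mul_stableExponent ha₀.ne', mul_div_cancel_left₀ _ hsin']

end StableLaw

/-! ### The Green function -/

section GreenFunction

variable {a δ : ℝ}

lemma G1_one_eq (a δ x : ℝ) : G1 a δ 1 x = (1 / (2 * Real.pi) : ℝ) •
    ∫ z : ℝ, Complex.exp (-(x * Complex.I * z)) * Complex.exp (-stableExponent a δ z) := by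
  simp only [G1, stableExponent, ray, one_mul, ← Complex.exp_add, Complex.ofReal_mul]
  ring_nf

lemma abs_lt_one_of_le_min (ha : a ≠ 1) (hδ : |δ| ≤ min a (2 - a)) : |δ| < 1 := by
  obtain ⟨h₁, h₂⟩ := le_min_iff.1 hδ
  rcases ha.lt_or_gt with h | h <;> linarith

lemma G1_one_nonneg (ha₀ : 0 < a) (ha₂ : a ≤ 2) (ha₁ : a ≠ 1) (hδ : |δ| ≤ min a (2 - a))
    (x : ℝ) : 0 ≤ G1 a δ 1 x := by
  rw [G1_one_eq]
  exact smul_nonneg (by positivity)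
    ((isCharFun_exp_neg_stableExponent ha₀ ha₂ ha₁ hδ).integral_exp_mul_nonneg
      (integrable_exp_neg_stableExponent ha₀ (abs_lt_one_of_le_min ha₁ hδ)) x)

lemma exists_norm_integral_stable_le_div (ha : 0 < a) (hδ : |δ| < 1) :
    ∃ c > 0, ∀ x : ℝ, ‖∫ z : ℝ, Complex.exp (-(x * Complex.I * z)) *
      Complex.exp (-stableExponent a δ z)‖ ≤ c / (1 + |x| ^ (1 + a)) := by
  obtain ⟨M, hM⟩ := exists_norm_integral_stable_le ha hδ
  have bounded (x : ℝ) : ‖∫ z : ℝ, Complex.exp (-(x * Complex.I * z)) *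
      Complex.exp (-stableExponent a δ z)‖ ≤ ∫ z, ‖Complex.exp (-stableExponent a δ z)‖ :=
    (norm_integral_le_integral_norm _).trans_eq
      (integral_congr_ae (.of_forall fun z ↦ by simp [Complex.norm_exp]))
  set C := ∫ z, ‖Complex.exp (-stableExponent a δ z)‖
  have : 0 ≤ C := integral_nonneg fun z ↦ norm_nonneg _
  refine ⟨C + |M| + 1, by positivity, fun x ↦ ?_⟩
  have decay : ‖∫ z : ℝ, Complex.exp (-(x * Complex.I * z)) *
      Complex.exp (-stableExponent a δ z)‖ * |x| ^ (1 + a) ≤ |M| := by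
    rcases eq_or_ne x 0 with rfl | hx
    · simp [Real.zero_rpow (by linarith : 1 + a ≠ 0)]
    · have hx' : 0 < |x| ^ (1 + a) := Real.rpow_pos_of_pos (abs_pos.2 hx) _
      rw [← le_div_iff₀ hx', div_eq_mul_inv, ← Real.rpow_neg (abs_nonneg x)]
      exact (hM x hx).trans (by gcongr; exact le_abs_self M)
  rw [le_div_iff₀ (by positivity), mul_add, mul_one]
  linarith [bounded x]

lemma exists_norm_G1_one_le (ha : 0 < a) (hδ : |δ| < 1) :
    ∃ c > 0, ∀ x : ℝ, ‖G1 a δ 1 x‖ ≤ c / (1 + |x| ^ (1 + a)) := by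
  obtain ⟨c, hc, bound⟩ := exists_norm_integral_stable_le_div ha hδ
  refine ⟨1 / (2 * Real.pi) * c, by positivity, fun x ↦ ?_⟩
  rw [G1_one_eq, norm_smul, Real.norm_of_nonneg (by positivity), mul_div_assoc]
  gcongr
  exact bound x

end GreenFunction

theorem stmt8 (a δ : ℝ) (ha : 0 < a ∧ a ≤ 2 ∧ a ≠ 1)
    (hδ : |δ| ≤ min a (2 - a)) :
    ∃ c : ℝ, 0 < c ∧ ∀ x : ℝ,
      0 ≤ G1 a δ 1 x ∧ G1 a δ 1 x ≤ ((c / (1 + |x| ^ (1 + a)) : ℝ) : ℂ) := by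
  obtain ⟨ha₀, ha₂, ha₁⟩ := ha
  obtain ⟨c, hc, bound⟩ := exists_norm_G1_one_le ha₀ (abs_lt_one_of_le_min ha₁ hδ)
  refine ⟨c, hc, fun x ↦ ?_⟩
  have nonneg := G1_one_nonneg ha₀ ha₂ ha₁ hδ x
  refine ⟨nonneg, ?_⟩
  rw [← Complex.norm_of_nonneg' nonneg, Complex.real_le_real]
  exact bound x
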